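/- arXiv:1906.04785 — 7 statements merged into one kernel-verified Lean document; each statement's English description precedes it below -/
import Mathlib

section
/- Let μ ∈ ℝ and σ > 0, and let X be a random variable with X ~ N(μ, σ²). Then for every differentiable function g : ℝ → ℝ such that E|g'(X)|, E|X g(X)| and E|g(X)| are all finite, one has E[σ² g'(X) − (X − μ) g(X)] = 0. -/
open MeasureTheory ProbabilityTheory

/-- Necessity direction of the Stein characterisation of the normal distribution:
if `X ~ N(μ, σ²)` then `E[σ² g'(X) − (X − μ) g(X)] = 0` for all differentiable `g`
with `E|g'(X)|`, `E|X g(X)|` and `E|g(X)|` finite. -/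
theorem stein_characterisation_normal_necessity
    {Ω : Type*} [MeasurableSpace Ω] (P : Measure Ω) [IsProbabilityMeasure P]
    (μ σ : ℝ) (hσ : 0 < σ) (X : Ω → ℝ) (hX : Measurable X)
    (hlaw : P.map X = gaussianReal μ ⟨σ ^ 2, sq_nonneg σ⟩)
    (g : ℝ → ℝ) (hg : Differentiable ℝ g)
    (h1 : Integrable (fun ω => deriv g (X ω)) P)
    (h2 : Integrable (fun ω => X ω * g (X ω)) P)
    (h3 : Integrable (fun ω => g (X ω)) P) :
    ∫ ω, (σ ^ 2 * deriv g (X ω) - (X ω - μ) * g (X ω)) ∂P = 0 := by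
  set v : NNReal := ⟨σ ^ 2, sq_nonneg σ⟩ with hv
  have hvc : (v : ℝ) = σ ^ 2 := rfl
  have hσ2 : σ ^ 2 ≠ 0 := by positivity
  have hv0 : v ≠ 0 := by
    intro h
    apply hσ2
    rw [← hvc, h]
    rfl
  have key : ∀ f : ℝ → ℝ, Measurable f → Integrable (fun ω => f (X ω)) P →
      Integrable (fun x => gaussianPDFReal μ v x * f x) := by
    intro f hf hi
    have h : Integrable f (P.map X) :=
      (integrable_map_measure hf.aestronglyMeasurable hX.aemeasurable).2 hi
    rw [hlaw, gaussianReal_of_var_ne_zero μ hv0,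
      integrable_withDensity_iff_integrable_smul' (measurable_gaussianPDF μ v)
        (Filter.Eventually.of_forall fun x => gaussianPDF_lt_top)] at h
    simpa [toReal_gaussianPDF] using h
  have hgm : Measurable g := hg.continuous.measurable
  have hdm : Measurable (deriv g) := measurable_deriv g
  have k1 := key _ hdm h1
  have k2 := key (fun x => x * g x) (measurable_id.mul hgm) h2
  have k3 := key _ hgm h3
  have hm : Measurable (fun x => σ ^ 2 * deriv g x - (x - μ) * g x) := by fun_prop
  have hmap : ∫ ω, (σ ^ 2 * deriv g (X ω) - (X ω - μ) * g (X ω)) ∂P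
      = ∫ x, (σ ^ 2 * deriv g x - (x - μ) * g x) ∂(P.map X) :=
    (integral_map hX.aemeasurable hm.aestronglyMeasurable).symm
  rw [hmap, hlaw, integral_gaussianReal_eq_integral_smul hv0]
  simp only [smul_eq_mul]
  have hpdf : ∀ x, HasDerivAt (gaussianPDFReal μ v)
      (gaussianPDFReal μ v x * (-(x - μ) / σ ^ 2)) x := by
    intro x
    rw [gaussianPDFReal_def, hvc]
    have h : HasDerivAt (fun x : ℝ => -(x - μ) ^ 2 / (2 * σ ^ 2)) (-(x - μ) / σ ^ 2) x := by
      have h := ((((hasDerivAt_id x).sub_const μ).pow 2).neg).div_const (2 * σ ^ 2)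
      refine h.congr_deriv ?_
      simp only [id]
      push_cast
      field_simp
    exact (h.exp.const_mul _).congr_deriv (by ring)
  apply integral_eq_zero_of_hasDerivAt_of_integrable
    (f := fun x => σ ^ 2 * (gaussianPDFReal μ v x * g x))
  · intro x
    refine (((hpdf x).mul (hg x).hasDerivAt).const_mul (σ ^ 2)).congr_deriv ?_
    field_simp
    ring
  · refine (((k1.const_mul (σ ^ 2)).sub k2).add (k3.const_mul μ)).congr ?_
    refine Filter.Eventually.of_forall fun x => ?_
    simp only [Pi.add_apply, Pi.sub_apply]
    ring
  · exact k3.const_mul _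
end

section
/- Let μ ∈ ℝ and σ > 0, and let X be a real-valued integrable random variable such that E[σ² g'(X) − (X − μ) g(X)] = 0 for every compactly supported continuously differentiable function g : ℝ → ℝ. Then X ~ N(μ, σ²). -/
open MeasureTheory ProbabilityTheory

lemma stein_bdd_ext
    {Ω : Type*} [MeasurableSpace Ω] (P : Measure Ω) [IsProbabilityMeasure P]
    (μ σ : ℝ) (X : Ω → ℝ) (hX : Measurable X)
    (hint : Integrable X P)
    (hstein : ∀ g : ℝ → ℝ, ContDiff ℝ 1 g → HasCompactSupport g →
      ∫ ω, (σ ^ 2 * deriv g (X ω) - (X ω - μ) * g (X ω)) ∂P = 0)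
    (g g' : ℝ → ℝ) (hg : ContDiff ℝ 1 g) (hg' : ∀ x, HasDerivAt g (g' x) x) (A : ℝ)
    (hA : ∀ x, |g x| ≤ A) (hA' : ∀ x, |g' x| ≤ A) :
    ∫ ω, (σ ^ 2 * g' (X ω) - (X ω - μ) * g (X ω)) ∂P = 0 := by
  let χ : ContDiffBump (0 : ℝ) := default
  have hχ : ContDiff ℝ 1 χ := χ.contDiff
  have hχd : ∀ x, HasDerivAt χ (deriv χ x) x := fun x =>
    ((hχ.differentiable (by norm_num)) x).hasDerivAt
  have hχc : Continuous (deriv χ) := hχ.continuous_deriv (by norm_num)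
  obtain ⟨B, hB⟩ := hχc.bounded_above_of_compact_support χ.hasCompactSupport.deriv
  have hA0 : 0 ≤ A := (abs_nonneg _).trans (hA 0)
  have hB0 : 0 ≤ B := (norm_nonneg _).trans (hB 0)
  let c : ℕ → ℝ := fun n => 1 / ((n : ℝ) + 1)
  have hc0 : ∀ n, 0 < c n := fun n => by positivity
  have hc1 : ∀ n, c n ≤ 1 := fun n => by
    simp only [c]
    rw [div_le_one (by positivity)]
    have : (0 : ℝ) ≤ n := by positivity
    linarith
  have hc : Filter.Tendsto c Filter.atTop (nhds 0) := tendsto_one_div_add_atTop_nhds_zero_nat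
  let G : ℕ → ℝ → ℝ := fun n x => χ (c n * x) * g x
  have hGd : ∀ n x, HasDerivAt (G n) (deriv χ (c n * x) * c n * g x + χ (c n * x) * g' x) x := by
    intro n x
    have h1 : HasDerivAt (fun x => χ (c n * x)) (deriv χ (c n * x) * c n) x := by
      have h2 : HasDerivAt (fun x : ℝ => c n * x) (c n) x := by
        simpa using (hasDerivAt_id x).const_mul (c n)
      exact HasDerivAt.comp (h₂ := (χ : ℝ → ℝ)) x (hχd (c n * x)) h2
    exact h1.mul (hg' x)
  have hGC : ∀ n, ContDiff ℝ 1 (G n) := fun n =>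
    (hχ.comp (contDiff_const.mul contDiff_id)).mul hg
  have hGs : ∀ n, HasCompactSupport (G n) := by
    intro n
    have h1 : HasCompactSupport (fun x => χ (c n * x)) := by
      simpa using χ.hasCompactSupport.comp_smul (hc0 n).ne'
    exact h1.mul_right
  have hg'c : Continuous g' := by
    have : g' = deriv g := funext fun x => (hg' x).deriv.symm
    rw [this]; exact hg.continuous_deriv (by norm_num)
  have key : ∀ n, ∫ ω, (σ ^ 2 * (deriv χ (c n * X ω) * c n * g (X ω) + χ (c n * X ω) * g' (X ω))
      - (X ω - μ) * (χ (c n * X ω) * g (X ω))) ∂P = 0 := by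
    intro n
    have := hstein (G n) (hGC n) (hGs n)
    simp_rw [fun x => (hGd n x).deriv] at this
    exact this
  have lim := tendsto_integral_of_dominated_convergence (μ := P)
    (F := fun n ω => (σ ^ 2 * (deriv χ (c n * X ω) * c n * g (X ω) + χ (c n * X ω) * g' (X ω))
      - (X ω - μ) * (χ (c n * X ω) * g (X ω))))
    (f := fun ω => (σ ^ 2 * g' (X ω) - (X ω - μ) * g (X ω)))
    (fun ω => σ ^ 2 * (B * A + A) + (|X ω| + |μ|) * A) ?_ ?_ ?_ ?_
  · simp_rw [key] at lim
    exact (tendsto_nhds_unique lim tendsto_const_nhds)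
  · intro n
    have hcont : Continuous (fun x : ℝ => (σ ^ 2 * (deriv χ (c n * x) * c n * g x
      + χ (c n * x) * g' x) - (x - μ) * (χ (c n * x) * g x))) := by
      have h1 : Continuous (fun x => deriv χ (c n * x)) := hχc.comp (by fun_prop)
      have h2 : Continuous (fun x => χ (c n * x)) := χ.continuous.comp (by fun_prop)
      have h3 := hg.continuous
      fun_prop
    exact (hcont.measurable.comp hX).aestronglyMeasurable
  · exact (integrable_const _).add ((hint.abs.add (integrable_const _)).mul_const _)
  · intro n
    refine Filter.Eventually.of_forall fun ω => ?_
    have hχ1 : |χ (c n * X ω)| ≤ 1 := by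
      rw [abs_of_nonneg χ.nonneg]; exact χ.le_one
    have e1 : |deriv χ (c n * X ω) * c n * g (X ω)| ≤ B * A := by
      rw [abs_mul, abs_mul, abs_of_pos (hc0 n)]
      have := hB (c n * X ω)
      rw [Real.norm_eq_abs] at this
      calc _ ≤ B * 1 * A := by
            gcongr
            · exact hc1 n
            · exact hA _
        _ = _ := by ring
    have e2 : |χ (c n * X ω) * g' (X ω)| ≤ A := by
      rw [abs_mul]
      calc _ ≤ 1 * A := by
            gcongr
            exact hA' _
        _ = _ := by ring
    have e3 : |χ (c n * X ω) * g (X ω)| ≤ A := by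
      rw [abs_mul]
      calc _ ≤ 1 * A := by
            gcongr
            exact hA _
        _ = _ := by ring
    rw [Real.norm_eq_abs]
    refine (abs_sub _ _).trans ?_
    rw [abs_mul, abs_mul, abs_of_nonneg (sq_nonneg σ)]
    gcongr
    · exact (abs_add_le _ _).trans (add_le_add e1 e2)
    · exact abs_sub _ _
  · refine Filter.Eventually.of_forall fun ω => ?_
    have hcx : Filter.Tendsto (fun n => c n * X ω) Filter.atTop (nhds 0) := by
      simpa using hc.mul_const (X ω)
    have t1 : Filter.Tendsto (fun n => χ (c n * X ω)) Filter.atTop (nhds 1) := by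
      have := (χ.continuous.tendsto 0).comp hcx
      rwa [χ.one_of_mem_closedBall (Metric.mem_closedBall_self χ.rIn_pos.le)] at this
    have t2 : Filter.Tendsto (fun n => deriv χ (c n * X ω)) Filter.atTop (nhds (deriv χ 0)) :=
      (hχc.tendsto 0).comp hcx
    have := ((((t2.mul hc).mul_const (g (X ω))).add (t1.mul_const (g' (X ω)))).const_mul
      (σ ^ 2)).sub ((t1.mul_const (g (X ω))).const_mul (X ω - μ))
    simpa using this

/-- Sufficiency direction of the Stein characterisation of the normal distribution:
if `X` is integrable and `E[σ² g'(X) − (X − μ) g(X)] = 0` for every compactly supported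
continuously differentiable `g : ℝ → ℝ`, then `X ~ N(μ, σ²)`. -/
theorem stein_characterisation_normal_sufficiency
    {Ω : Type*} [MeasurableSpace Ω] (P : Measure Ω) [IsProbabilityMeasure P]
    (μ σ : ℝ) (hσ : 0 < σ) (X : Ω → ℝ) (hX : Measurable X)
    (hint : Integrable X P)
    (hstein : ∀ g : ℝ → ℝ, ContDiff ℝ 1 g → HasCompactSupport g →
      ∫ ω, (σ ^ 2 * deriv g (X ω) - (X ω - μ) * g (X ω)) ∂P = 0) :
    P.map X = gaussianReal μ ⟨σ ^ 2, sq_nonneg σ⟩ := by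
  have hext := stein_bdd_ext P μ σ X hX hint hstein
  have hPm : IsProbabilityMeasure (P.map X) := Measure.isProbabilityMeasure_map hX.aemeasurable
  let E : ℝ → Ω → ℂ := fun t ω => Complex.exp ((t * X ω : ℝ) * Complex.I)
  have hEn : ∀ t ω, ‖E t ω‖ = 1 := fun t ω => Complex.norm_exp_ofReal_mul_I _
  have hEm : ∀ t, AEStronglyMeasurable (E t) P := fun t => by
    have : Continuous (fun x : ℝ => Complex.exp ((t * x : ℝ) * Complex.I)) := by fun_prop
    exact (this.measurable.comp hX).aestronglyMeasurable
  have hEi : ∀ t, Integrable (E t) P := fun t =>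
    (integrable_const (1 : ℝ)).mono' (hEm t) (Filter.Eventually.of_forall fun ω => (hEn t ω).le)
  have hXm : AEStronglyMeasurable (fun ω => (X ω : ℂ)) P :=
    (Complex.measurable_ofReal.comp hX).aestronglyMeasurable
  have hXEi : ∀ t, Integrable (fun ω => (X ω : ℂ) * E t ω) P := fun t =>
    hint.abs.mono' (hXm.mul (hEm t)) (Filter.Eventually.of_forall fun ω => by
      simp [hEn])
  let φ : ℝ → ℂ := fun t => ∫ ω, E t ω ∂P
  have hφ : ∀ t, charFun (P.map X) t = φ t := by
    intro t
    rw [charFun_apply_real, integral_map hX.aemeasurable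
      (Continuous.aestronglyMeasurable (by fun_prop))]
    simp [φ, E]
  have hφd : ∀ t, HasDerivAt φ (∫ ω, (X ω : ℂ) * E t ω * Complex.I ∂P) t := by
    intro t
    refine (hasDerivAt_integral_of_dominated_loc_of_deriv_le (𝕜 := ℝ) (F := E)
      (F' := fun t ω => (X ω : ℂ) * E t ω * Complex.I) (bound := fun ω => |X ω|) (s := Set.univ)
      Filter.univ_mem (Filter.Eventually.of_forall hEm) (hEi t)
      ((hXEi t).mul_const _).aestronglyMeasurable
      (Filter.Eventually.of_forall fun ω s _ => by simp [hEn]) hint.abs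
      (Filter.Eventually.of_forall fun ω s _ => ?_)).2
    have h1 : HasDerivAt (fun s : ℝ => (((s * X ω : ℝ) : ℂ) * Complex.I))
        ((X ω : ℂ) * Complex.I) s := by
      have : HasDerivAt (fun s : ℝ => s * X ω) (X ω) s := by
        simpa using (hasDerivAt_id s).mul_const (X ω)
      exact this.ofReal_comp.mul_const _
    have h2 := h1.cexp
    have e : Complex.exp (((s * X ω : ℝ) : ℂ) * Complex.I) * ((X ω : ℂ) * Complex.I)
        = (X ω : ℂ) * E s ω * Complex.I := by
      simp only [E]; ring
    rw [e] at h2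
    exact h2
  have hEq : ∀ t : ℝ, ∫ ω, (X ω : ℂ) * E t ω ∂P = (μ + σ ^ 2 * t * Complex.I) * φ t := by
    intro t
    have hF : Integrable (fun ω => (σ ^ 2 * t * Complex.I + μ : ℂ) * E t ω - X ω * E t ω) P :=
      ((hEi t).const_mul _).sub (hXEi t)
    have hz : ∫ ω, ((σ ^ 2 * t * Complex.I + μ : ℂ) * E t ω - X ω * E t ω) ∂P = 0 := by
      have hid : ∀ x : ℝ, HasDerivAt (fun x : ℝ => t * x) t x := fun x => by
        simpa using (hasDerivAt_id x).const_mul t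
      have hre : ∀ ω, (E t ω).re = Real.cos (t * X ω) := fun ω => Complex.exp_ofReal_mul_I_re _
      have him : ∀ ω, (E t ω).im = Real.sin (t * X ω) := fun ω => Complex.exp_ofReal_mul_I_im _
      have b : ∀ x y : ℝ, |x| ≤ 1 → |x * t| ≤ max 1 |t| := fun x y h => by
        rw [abs_mul]
        refine le_trans ?_ (le_max_right _ _)
        exact mul_le_of_le_one_left (abs_nonneg _) h
      apply Complex.ext
      · have h := hext (fun x => Real.cos (t * x)) (fun x => -Real.sin (t * x) * t)
          (by fun_prop) (fun x => (hid x).cos) (max 1 |t|)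
          (fun x => (Real.abs_cos_le_one _).trans (le_max_left _ _))
          (fun x => b _ 0 (by rw [abs_neg]; exact Real.abs_sin_le_one _))
        have h2 := Complex.reCLM.integral_comp_comm hF
        simp only [Complex.reCLM_apply] at h2
        rw [← h2, Complex.zero_re, ← h]
        congr 1; ext ω
        simp [hre, him, ← Complex.ofReal_pow]
        ring
      · have h := hext (fun x => Real.sin (t * x)) (fun x => Real.cos (t * x) * t)
          (by fun_prop) (fun x => (hid x).sin) (max 1 |t|)
          (fun x => (Real.abs_sin_le_one _).trans (le_max_left _ _))
          (fun x => b _ 0 (Real.abs_cos_le_one _))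
        have h2 := Complex.imCLM.integral_comp_comm hF
        simp only [Complex.imCLM_apply] at h2
        rw [← h2, Complex.zero_im, ← h]
        congr 1; ext ω
        simp [hre, him, ← Complex.ofReal_pow]
        ring
    rw [integral_sub ((hEi t).const_mul _) (hXEi t), integral_const_mul] at hz
    rw [← sub_eq_zero.mp hz]
    simp only [φ]; ring
  have hφd' : ∀ t : ℝ, HasDerivAt φ ((μ * Complex.I - σ ^ 2 * t) * φ t) t := by
    intro t
    convert hφd t using 1
    rw [integral_mul_const, hEq]
    linear_combination (-(σ : ℂ) ^ 2 * t * φ t) * Complex.I_sq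
  let ψ : ℝ → ℂ := fun t => φ t * Complex.exp (-(t * μ * Complex.I - σ ^ 2 * t ^ 2 / 2))
  have hψ : ∀ t : ℝ, HasDerivAt ψ 0 t := by
    intro t
    have ht : HasDerivAt (fun t : ℝ => (t : ℂ)) 1 t := (hasDerivAt_id t).ofReal_comp
    have h1 : HasDerivAt (fun t : ℝ => -((t : ℂ) * μ * Complex.I - σ ^ 2 * t ^ 2 / 2))
        (-(μ * Complex.I - σ ^ 2 * t)) t := by
      refine ((((ht.mul_const (μ : ℂ)).mul_const Complex.I).sub
        (((ht.pow 2).const_mul ((σ : ℂ) ^ 2)).div_const 2)).neg).congr_deriv ?_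
      simp; ring
    refine ((hφd' t).mul h1.cexp).congr_deriv ?_
    ring
  obtain ⟨v, hv⟩ : ∃ v : NNReal, v = ⟨σ ^ 2, sq_nonneg σ⟩ := ⟨_, rfl⟩
  have hv' : (v : ℝ) = σ ^ 2 := by rw [hv]; rfl
  change P.map X = gaussianReal μ (⟨σ ^ 2, sq_nonneg σ⟩ : NNReal)
  rw [← hv]
  apply Measure.ext_of_charFun
  ext t
  rw [hφ, charFun_gaussianReal]
  have hc := is_const_of_deriv_eq_zero (fun s => (hψ s).differentiableAt)
    (fun s => (hψ s).deriv) t 0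
  have h0 : ψ 0 = 1 := by simp [ψ, φ, E]
  rw [h0] at hc
  simp only [ψ] at hc
  rw [Complex.exp_neg, ← div_eq_mul_inv, div_eq_one_iff_eq (Complex.exp_ne_zero _)] at hc
  rw [hc, hv']
  simp
end

section
/- Let ρ ∈ (−1, 1), let X and V be independent standard normal random variables, set Y = ρX + √(1 − ρ²)V and Z = XY. Then for every differentiable function f : ℝ → ℝ such that E|f(Z)|, E|Z f(Z)|, E|X² f'(Z)| and E|X² f(Z)| are all finite, one has E[Z f(Z)] = E[(1 − ρ²) X² f'(Z) + ρ X² f(Z)]. -/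
open MeasureTheory ProbabilityTheory

lemma aux_int (h : ℝ → ℝ) (hh : Integrable h (gaussianReal 0 1)) :
    Integrable (fun v => gaussianPDFReal 0 1 v * h v) volume := by
  rw [gaussianReal_of_var_ne_zero 0 one_ne_zero,
    integrable_withDensity_iff_integrable_smul' (measurable_gaussianPDF 0 1)
      (Filter.Eventually.of_forall fun x => gaussianPDF_lt_top)] at hh
  simpa [toReal_gaussianPDF] using hh

lemma aux_pdf (v : ℝ) : HasDerivAt (gaussianPDFReal 0 1) (-v * gaussianPDFReal 0 1 v) v := by
  have h : HasDerivAt (fun v : ℝ => (Real.sqrt (2 * Real.pi * (1 : NNReal)))⁻¹ *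
      Real.exp (-(v - 0) ^ 2 / (2 * (1 : NNReal)))) (-v * gaussianPDFReal 0 1 v) v := by
    have h1 : HasDerivAt (fun v : ℝ => -(v - 0) ^ 2 / (2 * (1 : NNReal))) (-v) v := by
      have := (((hasDerivAt_id v).sub_const 0).pow 2).neg.div_const (2 * ((1 : NNReal) : ℝ))
      exact this.congr_deriv (by simp; ring)
    refine (h1.exp.const_mul ((Real.sqrt (2 * Real.pi * (1 : NNReal)))⁻¹)).congr_deriv ?_
    simp only [gaussianPDFReal]
    ring
  exact h

lemma aux_slice (f : ℝ → ℝ) (hf : Differentiable ℝ f) (a b : ℝ)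
    (h1 : Integrable (fun v => f (a + b * v)) (gaussianReal 0 1))
    (h2 : Integrable (fun v => b * v * f (a + b * v) - b ^ 2 * deriv f (a + b * v))
      (gaussianReal 0 1)) :
    ∫ v, (b * v * f (a + b * v) - b ^ 2 * deriv f (a + b * v)) ∂(gaussianReal 0 1) = 0 := by
  rw [integral_gaussianReal_eq_integral_smul one_ne_zero]
  simp only [smul_eq_mul]
  refine integral_eq_zero_of_hasDerivAt_of_integrable
    (f := fun v => -b * (gaussianPDFReal 0 1 v * f (a + b * v))) ?_ (aux_int _ h2)
    ((aux_int _ h1).const_mul _)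
  intro v
  have hg : HasDerivAt (fun v => f (a + b * v)) (deriv f (a + b * v) * b) v := by
    have hl : HasDerivAt (fun v : ℝ => a + b * v) b v := by
      simpa using ((hasDerivAt_id v).const_mul b).const_add a
    exact (hf (a + b * v)).hasDerivAt.comp v hl
  refine (((aux_pdf v).mul hg).const_mul (-b)).congr_deriv ?_
  ring

/-- For `X, V` independent standard normals, `Y = ρX + √(1 − ρ²)V`, `Z = XY` and any
differentiable `f` with `E|f(Z)|`, `E|Z f(Z)|`, `E|X² f'(Z)|`, `E|X² f(Z)|` finite, one has
`E[Z f(Z)] = E[(1 − ρ²) X² f'(Z) + ρ X² f(Z)]`. -/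
theorem product_normal_stein_identity_first_order
    {Ω : Type*} [MeasurableSpace Ω] (P : Measure Ω) [IsProbabilityMeasure P]
    (ρ : ℝ) (hρ : ρ ∈ Set.Ioo (-1 : ℝ) 1)
    (X V : Ω → ℝ) (hX : Measurable X) (hV : Measurable V)
    (hXlaw : P.map X = gaussianReal 0 1) (hVlaw : P.map V = gaussianReal 0 1)
    (hindep : IndepFun X V P)
    (Y Z : Ω → ℝ)
    (hY : ∀ ω, Y ω = ρ * X ω + Real.sqrt (1 - ρ ^ 2) * V ω)
    (hZ : ∀ ω, Z ω = X ω * Y ω)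
    (f : ℝ → ℝ) (hf : Differentiable ℝ f)
    (h1 : Integrable (fun ω => f (Z ω)) P)
    (h2 : Integrable (fun ω => Z ω * f (Z ω)) P)
    (h3 : Integrable (fun ω => (X ω) ^ 2 * deriv f (Z ω)) P)
    (h4 : Integrable (fun ω => (X ω) ^ 2 * f (Z ω)) P) :
    ∫ ω, Z ω * f (Z ω) ∂P
      = ∫ ω, ((1 - ρ ^ 2) * (X ω) ^ 2 * deriv f (Z ω) + ρ * (X ω) ^ 2 * f (Z ω)) ∂P := by
  obtain ⟨hρ1, hρ2⟩ := hρ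
  set s := Real.sqrt (1 - ρ ^ 2) with hs
  have hs2 : s ^ 2 = 1 - ρ ^ 2 := Real.sq_sqrt (by nlinarith)
  have hlaw : P.map (fun ω => (X ω, V ω)) = (gaussianReal 0 1).prod (gaussianReal 0 1) := by
    rw [(indepFun_iff_map_prod_eq_prod_map_map hX.aemeasurable hV.aemeasurable).1 hindep,
      hXlaw, hVlaw]
  have hXV : Measurable (fun ω => (X ω, V ω)) := hX.prodMk hV
  have hZ' : ∀ ω, Z ω = ρ * X ω ^ 2 + s * X ω * V ω := fun ω => by rw [hZ, hY]; ring
  have hfm : Measurable f := hf.continuous.measurable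
  have hdm : Measurable (deriv f) := measurable_deriv f
  let G : ℝ × ℝ → ℝ := fun p => f (ρ * p.1 ^ 2 + s * p.1 * p.2)
  let D : ℝ × ℝ → ℝ := fun p => s * p.1 * p.2 * f (ρ * p.1 ^ 2 + s * p.1 * p.2)
    - (s * p.1) ^ 2 * deriv f (ρ * p.1 ^ 2 + s * p.1 * p.2)
  have hGm : Measurable G := hfm.comp (by fun_prop)
  have hG'm : Measurable (fun p : ℝ × ℝ => deriv f (ρ * p.1 ^ 2 + s * p.1 * p.2)) :=
    hdm.comp (by fun_prop)
  have hDm : Measurable D := by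
    refine Measurable.sub (Measurable.mul (by fun_prop) hGm) (Measurable.mul (by fun_prop) hG'm)
  have hR : Integrable (fun ω => (1 - ρ ^ 2) * (X ω) ^ 2 * deriv f (Z ω)
      + ρ * (X ω) ^ 2 * f (Z ω)) P := by
    refine ((h3.const_mul (1 - ρ ^ 2)).add (h4.const_mul ρ)).congr
      (Filter.Eventually.of_forall fun ω => ?_)
    simp only [Pi.add_apply]
    ring
  have hDeq : ∀ ω, D (X ω, V ω) = Z ω * f (Z ω) - ((1 - ρ ^ 2) * (X ω) ^ 2 * deriv f (Z ω)
      + ρ * (X ω) ^ 2 * f (Z ω)) := by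
    intro ω
    simp only [D, ← hZ', ← hs2]
    have : s * X ω * V ω = Z ω - ρ * X ω ^ 2 := by rw [hZ']; ring
    rw [this]
    ring
  have hDi : Integrable D ((gaussianReal 0 1).prod (gaussianReal 0 1)) := by
    rw [← hlaw, integrable_map_measure hDm.aestronglyMeasurable hXV.aemeasurable]
    exact (h2.sub hR).congr (Filter.Eventually.of_forall fun ω => (hDeq ω).symm)
  have hGi : Integrable G ((gaussianReal 0 1).prod (gaussianReal 0 1)) := by
    rw [← hlaw, integrable_map_measure hGm.aestronglyMeasurable hXV.aemeasurable]
    exact h1.congr (Filter.Eventually.of_forall fun ω => by simp [G, hZ'])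
  rw [← sub_eq_zero, ← integral_sub h2 hR]
  simp only [← hDeq]
  rw [← integral_map (φ := fun ω => (X ω, V ω)) (f := D) hXV.aemeasurable
    hDm.aestronglyMeasurable, hlaw, integral_prod _ hDi]
  apply integral_eq_zero_of_ae
  filter_upwards [hDi.prod_right_ae, hGi.prod_right_ae] with x hx1 hx2
  exact aux_slice f hf (ρ * x ^ 2) (s * x) hx2 hx1
end

section
/- Let ρ ∈ (−1, 1), let X and V be independent standard normal random variables, set Y = ρX + √(1 − ρ²)V and Z = XY. Then for every twice differentiable function f : ℝ → ℝ such that E|f(Z)|, E|Z f(Z)|, E|f'(Z)|, E|Z f'(Z)|, E|Z f''(Z)|, E|X² f(Z)|, E|X² f'(Z)| and E|X² f''(Z)| are all finite, one has E[(1 − ρ²) Z f''(Z) + ((1 − ρ²) + 2ρZ) f'(Z) + (ρ − Z) f(Z)] = 0. -/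
open MeasureTheory ProbabilityTheory

lemma stein_one (g g' : ℝ → ℝ) (hg : ∀ x, HasDerivAt g (g' x) x)
    (h1 : Integrable (fun x => x * g x) (gaussianReal 0 1))
    (h2 : Integrable g' (gaussianReal 0 1)) :
    ∫ x, x * g x ∂(gaussianReal 0 1) = ∫ x, g' x ∂(gaussianReal 0 1) := by
  have hgc : Continuous g := continuous_iff_continuousAt.2 fun x => (hg x).continuousAt
  have h0 : Integrable g (gaussianReal 0 1) := by
    obtain ⟨C, hC⟩ := (isCompact_Icc (a := (-1 : ℝ)) (b := 1)).exists_bound_of_continuousOn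
      hgc.continuousOn
    refine Integrable.mono' (h1.norm.add (integrable_const |C|))
      hgc.aestronglyMeasurable (Filter.Eventually.of_forall fun x => ?_)
    simp only [Pi.add_apply, norm_mul, Real.norm_eq_abs]
    by_cases hx : x ∈ Set.Icc (-1 : ℝ) 1
    · have := hC x hx
      rw [Real.norm_eq_abs] at this
      have := le_abs_self C
      have : 0 ≤ |x| * |g x| := by positivity
      linarith
    · have hx1 : 1 ≤ |x| := by
        by_contra h
        push Not at h
        exact hx ⟨(abs_lt.1 h).1.le, (abs_lt.1 h).2.le⟩
      have : |g x| ≤ |x| * |g x| := le_mul_of_one_le_left (abs_nonneg _) hx1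
      have := abs_nonneg C
      linarith
  have key : ∀ h : ℝ → ℝ, Integrable h (gaussianReal 0 1) ↔
      Integrable (fun x => gaussianPDFReal 0 1 x * h x) volume := by
    intro h
    rw [gaussianReal_of_var_ne_zero 0 one_ne_zero,
      integrable_withDensity_iff_integrable_smul' (by fun_prop)
        (Filter.Eventually.of_forall fun x => by simp [gaussianPDF])]
    simp [gaussianPDF, gaussianPDFReal_nonneg]
  have hd : ∀ x, HasDerivAt (gaussianPDFReal 0 1) (-x * gaussianPDFReal 0 1 x) x := by
    intro x
    have e : gaussianPDFReal 0 1 = fun x => (Real.sqrt (2 * Real.pi))⁻¹ * Real.exp (-x^2/2) := by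
      ext y; simp [gaussianPDFReal]
    rw [e]
    have := (((hasDerivAt_pow 2 x).neg.div_const 2).exp).const_mul (Real.sqrt (2 * Real.pi))⁻¹
    refine this.congr_deriv ?_
    simp only [Pi.neg_apply, Nat.cast_ofNat]
    ring
  have hu : ∀ x, HasDerivAt (fun x => gaussianPDFReal 0 1 x * g x)
      (gaussianPDFReal 0 1 x * g' x - gaussianPDFReal 0 1 x * (x * g x)) x := by
    intro x
    refine ((hd x).mul (hg x)).congr_deriv ?_
    ring
  have i1 := (key _).1 h1
  have i2 := (key _).1 h2
  have z := integral_eq_zero_of_hasDerivAt_of_integrable hu (i2.sub i1) ((key _).1 h0)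
  rw [integral_sub i2 i1] at z
  rw [integral_gaussianReal_eq_integral_smul one_ne_zero,
    integral_gaussianReal_eq_integral_smul one_ne_zero]
  simp only [smul_eq_mul]
  linarith

lemma stein_two {Ω : Type*} [MeasurableSpace Ω] (P : Measure Ω) [IsProbabilityMeasure P]
    (A B : Ω → ℝ) (hA : Measurable A) (hB : Measurable B)
    (hAl : P.map A = gaussianReal 0 1) (hBl : P.map B = gaussianReal 0 1)
    (hi : IndepFun A B P) (G G' : ℝ → ℝ → ℝ)
    (hG : Measurable (fun p : ℝ × ℝ => G p.1 p.2))
    (hG' : Measurable (fun p : ℝ × ℝ => G' p.1 p.2))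
    (hd : ∀ a b, HasDerivAt (G a) (G' a b) b)
    (h1 : Integrable (fun ω => B ω * G (A ω) (B ω)) P)
    (h2 : Integrable (fun ω => G' (A ω) (B ω)) P) :
    ∫ ω, B ω * G (A ω) (B ω) ∂P = ∫ ω, G' (A ω) (B ω) ∂P := by
  have hm : P.map (fun ω => (A ω, B ω)) = (gaussianReal 0 1).prod (gaussianReal 0 1) := by
    rw [(indepFun_iff_map_prod_eq_prod_map_map hA.aemeasurable hB.aemeasurable).1 hi, hAl, hBl]
  have hAB : Measurable (fun ω => (A ω, B ω)) := hA.prodMk hB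
  have m1 : Measurable (fun p : ℝ × ℝ => p.2 * G p.1 p.2) := measurable_snd.mul hG
  have j1 : Integrable (fun p : ℝ × ℝ => p.2 * G p.1 p.2)
      ((gaussianReal 0 1).prod (gaussianReal 0 1)) := by
    rw [← hm]
    exact (integrable_map_measure m1.aestronglyMeasurable hAB.aemeasurable).2 h1
  have j2 : Integrable (fun p : ℝ × ℝ => G' p.1 p.2)
      ((gaussianReal 0 1).prod (gaussianReal 0 1)) := by
    rw [← hm]
    exact (integrable_map_measure hG'.aestronglyMeasurable hAB.aemeasurable).2 h2
  have e1 := integral_map (μ := P) hAB.aemeasurable m1.aestronglyMeasurable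
  have e2 := integral_map (μ := P) hAB.aemeasurable hG'.aestronglyMeasurable
  simp only at e1 e2
  rw [← e1, ← e2, hm, integral_prod _ j1, integral_prod _ j2]
  refine integral_congr_ae ?_
  filter_upwards [j1.prod_right_ae, j2.prod_right_ae] with a ha1 ha2
  exact stein_one (G a) (G' a) (hd a) ha1 ha2

/-- Stein characterisation (necessity, `n = 1` case) of the product of two zero mean
correlated normal random variables: for `X, V` independent standard normals,
`Y = ρX + √(1 − ρ²)V`, `Z = XY` and any twice differentiable `f` with the stated
integrability conditions,
`E[(1 − ρ²) Z f''(Z) + ((1 − ρ²) + 2ρZ) f'(Z) + (ρ − Z) f(Z)] = 0`. -/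
theorem product_normal_stein_identity
    {Ω : Type*} [MeasurableSpace Ω] (P : Measure Ω) [IsProbabilityMeasure P]
    (ρ : ℝ) (hρ : ρ ∈ Set.Ioo (-1 : ℝ) 1)
    (X V : Ω → ℝ) (hX : Measurable X) (hV : Measurable V)
    (hXlaw : P.map X = gaussianReal 0 1) (hVlaw : P.map V = gaussianReal 0 1)
    (hindep : IndepFun X V P)
    (Y Z : Ω → ℝ)
    (hY : ∀ ω, Y ω = ρ * X ω + Real.sqrt (1 - ρ ^ 2) * V ω)
    (hZ : ∀ ω, Z ω = X ω * Y ω)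
    (f : ℝ → ℝ) (hf : Differentiable ℝ f) (hf' : Differentiable ℝ (deriv f))
    (h1 : Integrable (fun ω => f (Z ω)) P)
    (h2 : Integrable (fun ω => Z ω * f (Z ω)) P)
    (h3 : Integrable (fun ω => deriv f (Z ω)) P)
    (h4 : Integrable (fun ω => Z ω * deriv f (Z ω)) P)
    (h5 : Integrable (fun ω => Z ω * deriv (deriv f) (Z ω)) P)
    (h6 : Integrable (fun ω => (X ω) ^ 2 * f (Z ω)) P)
    (h7 : Integrable (fun ω => (X ω) ^ 2 * deriv f (Z ω)) P)
    (h8 : Integrable (fun ω => (X ω) ^ 2 * deriv (deriv f) (Z ω)) P) :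
    ∫ ω, ((1 - ρ ^ 2) * Z ω * deriv (deriv f) (Z ω)
        + ((1 - ρ ^ 2) + 2 * ρ * Z ω) * deriv f (Z ω)
        + (ρ - Z ω) * f (Z ω)) ∂P = 0 := by
  have hc2 : 0 < 1 - ρ ^ 2 := by nlinarith [hρ.1, hρ.2]
  obtain ⟨c, hc⟩ : ∃ c, c = Real.sqrt (1 - ρ ^ 2) := ⟨_, rfl⟩
  have hcp : 0 < c := hc ▸ Real.sqrt_pos.2 hc2
  have hcc : c ^ 2 = 1 - ρ ^ 2 := by rw [hc]; exact Real.sq_sqrt hc2.le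
  have hZ' : ∀ ω, Z ω = X ω * (ρ * X ω + c * V ω) := fun ω => by rw [hZ, hY, hc]
  -- integration by parts in V
  have SA : ∀ h : ℝ → ℝ, Differentiable ℝ h →
      Integrable (fun ω => Z ω * h (Z ω)) P → Integrable (fun ω => (X ω) ^ 2 * h (Z ω)) P →
      Integrable (fun ω => (X ω) ^ 2 * deriv h (Z ω)) P →
      ∫ ω, Z ω * h (Z ω) ∂P = ρ * ∫ ω, (X ω) ^ 2 * h (Z ω) ∂P
        + (1 - ρ ^ 2) * ∫ ω, (X ω) ^ 2 * deriv h (Z ω) ∂P := by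
    intro h hh i1 i2 i3
    have mh := hh.continuous.measurable
    have md := measurable_deriv h
    have e1 : (fun ω => V ω * (c * X ω * h (X ω * (ρ * X ω + c * V ω)))) =
        fun ω => Z ω * h (Z ω) - ρ * ((X ω) ^ 2 * h (Z ω)) := by
      ext ω; rw [← hZ' ω]; nth_rw 2 [hZ' ω]; ring
    have e2 : (fun ω => c ^ 2 * (X ω) ^ 2 * deriv h (X ω * (ρ * X ω + c * V ω))) =
        fun ω => (1 - ρ ^ 2) * ((X ω) ^ 2 * deriv h (Z ω)) := by
      ext ω; rw [← hZ' ω, hcc]; ring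
    have := stein_two P X V hX hV hXlaw hVlaw hindep
      (fun x v => c * x * h (x * (ρ * x + c * v)))
      (fun x v => c ^ 2 * x ^ 2 * deriv h (x * (ρ * x + c * v)))
      (by fun_prop) (by fun_prop)
      (fun x v => by
        have k : HasDerivAt (fun v => x * (ρ * x + c * v)) (x * (c * 1)) v :=
          (((hasDerivAt_id v).const_mul c).const_add (ρ * x)).const_mul x
        refine (((hh _).hasDerivAt.comp v k).const_mul (c * x)).congr_deriv ?_
        ring)
      (by rw [e1]; exact i1.sub (i2.const_mul ρ))
      (by rw [e2]; exact i3.const_mul _)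
    rw [e1, e2, integral_sub i1 (i2.const_mul ρ), integral_const_mul, integral_const_mul] at this
    linarith
  -- integration by parts in X
  have SB : ∀ h : ℝ → ℝ, Differentiable ℝ h →
      Integrable (fun ω => h (Z ω)) P → Integrable (fun ω => (X ω) ^ 2 * h (Z ω)) P →
      Integrable (fun ω => Z ω * deriv h (Z ω)) P →
      Integrable (fun ω => (X ω) ^ 2 * deriv h (Z ω)) P →
      ∫ ω, (X ω) ^ 2 * h (Z ω) ∂P = ∫ ω, h (Z ω) ∂P + ∫ ω, Z ω * deriv h (Z ω) ∂P
        + ρ * ∫ ω, (X ω) ^ 2 * deriv h (Z ω) ∂P := by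
    intro h hh i0 i1 i2 i3
    have mh := hh.continuous.measurable
    have md := measurable_deriv h
    have e1 : (fun ω => X ω * (X ω * h (X ω * (ρ * X ω + c * V ω)))) =
        fun ω => (X ω) ^ 2 * h (Z ω) := by
      ext ω; rw [← hZ' ω]; ring
    have e2 : (fun ω => h (X ω * (ρ * X ω + c * V ω)) + (X ω * (ρ * X ω + c * V ω)
          + ρ * X ω ^ 2) * deriv h (X ω * (ρ * X ω + c * V ω))) =
        fun ω => h (Z ω) + Z ω * deriv h (Z ω) + ρ * ((X ω) ^ 2 * deriv h (Z ω)) := by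
      ext ω; rw [← hZ' ω]; ring
    have := stein_two P V X hV hX hVlaw hXlaw hindep.symm
      (fun v x => x * h (x * (ρ * x + c * v)))
      (fun v x => h (x * (ρ * x + c * v)) + (x * (ρ * x + c * v)
          + ρ * x ^ 2) * deriv h (x * (ρ * x + c * v)))
      (by fun_prop) (by fun_prop)
      (fun v x => by
        have k : HasDerivAt (fun x => x * (ρ * x + c * v))
            (1 * (ρ * x + c * v) + x * (ρ * 1)) x :=
          (hasDerivAt_id x).mul (((hasDerivAt_id x).const_mul ρ).add_const (c * v))
        refine ((hasDerivAt_id x).mul ((hh _).hasDerivAt.comp x k)).congr_deriv ?_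
        simp only [id, Function.comp]
        ring)
      (by rw [e1]; exact i1)
      (by rw [e2]; exact (i0.add i2).add (i3.const_mul ρ))
    rw [e1, e2, integral_add (i0.fun_add i2) (i3.const_mul ρ), integral_add i0 i2,
      integral_const_mul] at this
    exact this
  have A1 := SA f hf h2 h6 h7
  have A2 := SA (deriv f) hf' h4 h7 h8
  have B1 := SB f hf h1 h6 h4 h7
  have B2 := SB (deriv f) hf' h3 h7 h5 h8
  have e : (fun ω => (1 - ρ ^ 2) * Z ω * deriv (deriv f) (Z ω)
        + ((1 - ρ ^ 2) + 2 * ρ * Z ω) * deriv f (Z ω)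
        + (ρ - Z ω) * f (Z ω)) = fun ω =>
      (1 - ρ ^ 2) * (Z ω * deriv (deriv f) (Z ω)) + (1 - ρ ^ 2) * deriv f (Z ω)
        + 2 * ρ * (Z ω * deriv f (Z ω)) + ρ * f (Z ω) - Z ω * f (Z ω) := by
    ext ω; ring
  have k5 := h5.const_mul (1 - ρ ^ 2)
  have k3 := h3.const_mul (1 - ρ ^ 2)
  have k4 := h4.const_mul (2 * ρ)
  have k1 := h1.const_mul ρ
  rw [e, integral_sub (((k5.fun_add k3).fun_add k4).fun_add k1) h2, integral_add ((k5.fun_add k3).fun_add k4) k1,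
    integral_add (k5.fun_add k3) k4, integral_add k5 k3]
  simp only [integral_const_mul]
  linear_combination (-1) * A1 - ρ * B1 - (1 - ρ ^ 2) * B2 + ρ * A2
end

section
/- Let ρ ∈ (−1, 1) and n ≥ 1. Then the function x ↦ |x|^{(n−1)/2} exp(ρ n x/(1 − ρ²)) I_{(n−1)/2}(n|x|/(1 − ρ²)), defined for x ≠ 0, is not Lebesgue integrable on ℝ, where I_ν(y) = Σ_{k=0}^∞ (y/2)^{2k+ν}/(k! Γ(k + ν + 1)). -/
open MeasureTheory

/-- The modified Bessel function of the first kind,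
`I_ν(y) = Σ_{k=0}^∞ (y/2)^{2k+ν}/(k! Γ(k + ν + 1))`. -/
noncomputable def besselI (ν y : ℝ) : ℝ :=
  ∑' k : ℕ, (y / 2) ^ (2 * (k : ℝ) + ν) / ((k.factorial : ℝ) * Real.Gamma ((k : ℝ) + ν + 1))

lemma gamma_lb (ν : ℝ) (hν : 0 ≤ ν) (k : ℕ) :
    Real.Gamma (ν + 1) ≤ Real.Gamma ((k : ℝ) + ν + 1) := by
  induction k with
  | zero => simp
  | succ k ih =>
    have hk : (0 : ℝ) ≤ k := Nat.cast_nonneg k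
    have e : ((k + 1 : ℕ) : ℝ) + ν + 1 = ((k : ℝ) + ν + 1) + 1 := by push_cast; ring
    rw [e, Real.Gamma_add_one (s := (k : ℝ) + ν + 1) (by positivity)]
    have hp : 0 < Real.Gamma ((k : ℝ) + ν + 1) := Real.Gamma_pos_of_pos (by positivity)
    nlinarith [mul_nonneg (add_nonneg hk hν) hp.le]

lemma besselI_lb (ν y : ℝ) (hν : 0 ≤ ν) (hy : 0 < y) :
    (y / 2) ^ ν / Real.Gamma (ν + 1) ≤ besselI ν y := by
  have hG : 0 < Real.Gamma (ν + 1) := Real.Gamma_pos_of_pos (by positivity)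
  have hnn : ∀ k : ℕ, 0 ≤ (y / 2) ^ (2 * (k : ℝ) + ν) /
      ((k.factorial : ℝ) * Real.Gamma ((k : ℝ) + ν + 1)) := by
    intro k
    have hp : 0 < Real.Gamma ((k : ℝ) + ν + 1) := Real.Gamma_pos_of_pos (by positivity)
    positivity
  have hs : Summable (fun k : ℕ => (y / 2) ^ (2 * (k : ℝ) + ν) /
      ((k.factorial : ℝ) * Real.Gamma ((k : ℝ) + ν + 1))) := by
    refine Summable.of_nonneg_of_le hnn (fun k => ?_)
      ((Real.summable_pow_div_factorial ((y / 2) ^ 2)).mul_left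
        ((y / 2) ^ ν / Real.Gamma (ν + 1)))
    have e : (y / 2) ^ (2 * (k : ℝ) + ν) = (y / 2) ^ ν * ((y / 2) ^ 2) ^ k := by
      rw [Real.rpow_add (by positivity), ← pow_mul, mul_comm]
      congr 1
      exact_mod_cast Real.rpow_natCast (y / 2) (2 * k)
    rw [e, div_mul_div_comm, mul_comm (Real.Gamma (ν + 1))]
    have := gamma_lb ν hν k
    gcongr
  have h := hs.le_tsum 0 (fun k _ => hnn k)
  simpa [besselI] using h

/-- The function `x ↦ |x|^{(n−1)/2} e^{ρnx/(1−ρ²)} I_{(n−1)/2}(n|x|/(1−ρ²))` is not Lebesgue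
integrable on `ℝ`, so the `I`-Bessel solution of the density ODE cannot contribute to a
probability density function. -/
theorem besselI_solution_not_integrable
    (ρ : ℝ) (hρ : ρ ∈ Set.Ioo (-1 : ℝ) 1) (n : ℕ) (hn : 1 ≤ n) :
    ¬ Integrable (fun x : ℝ =>
        |x| ^ (((n : ℝ) - 1) / 2) * Real.exp (ρ * n * x / (1 - ρ ^ 2)) *
          besselI (((n : ℝ) - 1) / 2) (n * |x| / (1 - ρ ^ 2))) volume := by
  obtain ⟨h1, h2⟩ := hρ
  intro hI
  have hd : 0 < 1 - ρ ^ 2 := by nlinarith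
  have hn' : (1 : ℝ) ≤ n := by exact_mod_cast hn
  have hν : 0 ≤ ((n : ℝ) - 1) / 2 := by linarith
  set ν := ((n : ℝ) - 1) / 2 with hνd
  have hG : 0 < Real.Gamma (ν + 1) := Real.Gamma_pos_of_pos (by positivity)
  set c := (n / (1 - ρ ^ 2) / 2) ^ ν / Real.Gamma (ν + 1) with hc
  have hc0 : 0 < c := by positivity
  have key : ∀ x : ℝ, 1 ≤ |x| → 0 ≤ ρ * x → c ≤ |x| ^ ν *
      Real.exp (ρ * n * x / (1 - ρ ^ 2)) * besselI ν (n * |x| / (1 - ρ ^ 2)) := by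
    intro x hx hρx
    have a1 : 1 ≤ |x| ^ ν := Real.one_le_rpow hx hν
    have a2 : 1 ≤ Real.exp (ρ * n * x / (1 - ρ ^ 2)) := by
      apply Real.one_le_exp
      have : ρ * n * x = n * (ρ * x) := by ring
      rw [this]
      positivity
    have hx0 : 0 < |x| := by linarith
    have a3 : c ≤ besselI ν (n * |x| / (1 - ρ ^ 2)) := by
      refine le_trans ?_ (besselI_lb ν _ hν (by positivity))
      rw [hc]
      gcongr
      nlinarith
    have a4 := one_le_mul_of_one_le_of_one_le a1 a2
    nlinarith
  have hfin := hI.measure_ge_lt_top hc0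
  rcases le_total 0 ρ with h | h
  · have hsub := measure_mono (μ := (volume : Measure ℝ)) (s := Set.Ici (1 : ℝ)) (fun x hx =>
      key x (le_trans hx (le_abs_self x)) (mul_nonneg h (zero_le_one.trans hx)))
    have := lt_of_le_of_lt hsub hfin
    simp at this
  · have hsub := measure_mono (μ := (volume : Measure ℝ)) (s := Set.Iic (-1 : ℝ)) (fun x hx =>
      key x (le_trans (by linarith [Set.mem_Iic.1 hx]) (neg_le_abs x))
        (mul_nonneg_of_nonpos_of_nonpos h (by linarith [Set.mem_Iic.1 hx])))
    have := lt_of_le_of_lt hsub hfin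
    simp at this
end

section
/- Let ν > −1/2 and −1 < β < 1. Then ∫_{−∞}^{∞} e^{βx} |x|^ν K_ν(|x|) dx = √π Γ(ν + 1/2) 2^ν / (1 − β²)^{ν + 1/2}, where K_ν(y) = ∫₀^∞ e^{−y cosh t} cosh(νt) dt for y > 0, and Γ is the Gamma function. -/
open MeasureTheory

/-- The modified Bessel function of the second kind,
`K_ν(y) = ∫₀^∞ e^{−y cosh t} cosh(νt) dt`. -/
noncomputable def besselK (ν y : ℝ) : ℝ :=
  ∫ t in Set.Ioi (0 : ℝ), Real.exp (-(y * Real.cosh t)) * Real.cosh (ν * t)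

lemma aux_gamma_int (a r : ℝ) (ha : 0 < a) (hr : 0 < r) :
    IntegrableOn (fun t : ℝ => t ^ (a - 1) * Real.exp (-(r * t))) (Set.Ioi 0) := by
  apply MeasureTheory.Integrable.of_integral_ne_zero
  rw [Real.integral_rpow_mul_exp_neg_mul_Ioi ha hr]
  have := Real.Gamma_pos_of_pos ha
  positivity

lemma aux_h_int (ν x : ℝ) (hν : -(1 / 2 : ℝ) < ν) (hx : 0 < x) :
    IntegrableOn (fun v : ℝ => v ^ (ν - 1) * Real.exp (-v - x ^ 2 / (4 * v))) (Set.Ioi 0) := by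
  have h1 := (aux_gamma_int (ν + 1) 1 (by linarith) one_pos).const_mul (4 / x ^ 2)
  refine Integrable.mono' h1 ?_ ?_
  · exact Measurable.aestronglyMeasurable (by fun_prop)
  · filter_upwards [ae_restrict_mem measurableSet_Ioi] with v hv
    have hv : 0 < v := hv
    rw [Real.norm_of_nonneg (by positivity), sub_eq_add_neg (-v), Real.exp_add,
      Real.rpow_sub_one hv.ne']
    have h2 : Real.exp (-(x ^ 2 / (4 * v))) ≤ 4 * v / x ^ 2 := by
      rw [Real.exp_neg, show 4 * v / x ^ 2 = (x ^ 2 / (4 * v))⁻¹ by rw [inv_div]]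
      apply inv_anti₀ (by positivity)
      linarith [Real.add_one_le_exp (x ^ 2 / (4 * v))]
    calc v ^ ν / v * (Real.exp (-v) * Real.exp (-(x ^ 2 / (4 * v))))
        ≤ v ^ ν / v * (Real.exp (-v) * (4 * v / x ^ 2)) := by gcongr
      _ = _ := by
        rw [add_sub_cancel_right, one_mul]; field_simp

lemma aux_bessel (ν x : ℝ) (hν : -(1 / 2 : ℝ) < ν) (hx : 0 < x) :
    x ^ ν * besselK ν x = 2 ^ (ν - 1) *
      ∫ v in Set.Ioi (0 : ℝ), v ^ (ν - 1) * Real.exp (-v - x ^ 2 / (4 * v)) := by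
  set g : ℝ → ℝ := fun t => Real.exp (-(x * Real.cosh t)) * Real.exp (ν * t) with hg
  have himg : (fun t : ℝ => x / 2 * Real.exp t) '' Set.univ = Set.Ioi 0 := by
    ext v
    simp only [Set.image_univ, Set.mem_range, Set.mem_Ioi]
    constructor
    · rintro ⟨t, rfl⟩; positivity
    · intro hv
      refine ⟨Real.log (2 * v / x), ?_⟩
      rw [Real.exp_log (by positivity)]; field_simp
  have hder : ∀ t ∈ (Set.univ : Set ℝ),
      HasDerivWithinAt (fun t : ℝ => x / 2 * Real.exp t) (x / 2 * Real.exp t) Set.univ t :=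
    fun t _ => ((Real.hasDerivAt_exp t).const_mul _).hasDerivWithinAt
  have hinj : Set.InjOn (fun t : ℝ => x / 2 * Real.exp t) Set.univ := by
    intro a _ b _ h
    have h' : x / 2 * Real.exp a = x / 2 * Real.exp b := h
    exact Real.exp_injective (mul_left_cancel₀ (by positivity) h')
  have hpt : (fun t : ℝ => |x / 2 * Real.exp t| • ((x / 2 * Real.exp t) ^ (ν - 1) *
      Real.exp (-(x / 2 * Real.exp t) - x ^ 2 / (4 * (x / 2 * Real.exp t)))))
      = fun t => (x / 2) ^ ν * g t := by
    ext t
    have hp : 0 < x / 2 * Real.exp t := by positivity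
    rw [abs_of_pos hp, smul_eq_mul, Real.rpow_sub_one hp.ne', Real.mul_rpow (by positivity)
      (by positivity), ← Real.exp_mul, hg]
    have : -(x / 2 * Real.exp t) - x ^ 2 / (4 * (x / 2 * Real.exp t)) = -(x * Real.cosh t) := by
      rw [Real.cosh_eq, Real.exp_neg]; field_simp; ring
    rw [this, mul_comm t ν]
    field_simp
  have hI := integral_image_eq_integral_abs_deriv_smul MeasurableSet.univ hder hinj
    (fun v : ℝ => v ^ (ν - 1) * Real.exp (-v - x ^ 2 / (4 * v)))
  have hInt := (integrableOn_image_iff_integrableOn_abs_deriv_smul MeasurableSet.univ hder hinj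
    (fun v : ℝ => v ^ (ν - 1) * Real.exp (-v - x ^ 2 / (4 * v))))
  rw [himg, hpt] at hI hInt
  have hgi : Integrable g := by
    have := hInt.1 (aux_h_int ν x hν hx)
    rw [integrableOn_univ] at this
    have h2 := this.const_mul ((x / 2) ^ ν)⁻¹
    have h3 : (x / 2) ^ ν ≠ 0 := by positivity
    simpa [← mul_assoc, inv_mul_cancel₀ h3] using h2
  have hK : 2 * besselK ν x = ∫ t, g t := by
    have h1 := integral_comp_abs (f := fun t => Real.exp (-(x * Real.cosh t)) * Real.cosh (ν * t))
    have h2 : ∀ t : ℝ, Real.exp (-(x * Real.cosh |t|)) * Real.cosh (ν * |t|)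
        = 2⁻¹ * (g t + g (-t)) := by
      intro t
      have : Real.cosh (ν * |t|) = Real.cosh (ν * t) := by
        rw [← Real.cosh_abs, abs_mul, abs_abs, ← abs_mul, Real.cosh_abs]
      simp only [hg]
      rw [Real.cosh_abs, this, Real.cosh_neg, Real.cosh_eq (ν * t), mul_neg]
      ring
    simp only [h2] at h1
    rw [integral_const_mul, integral_add hgi hgi.comp_neg, integral_neg_eq_self g] at h1
    unfold besselK
    linarith
  rw [hI, setIntegral_univ, integral_const_mul, ← hK, Real.div_rpow hx.le (by norm_num),
    Real.rpow_sub_one (by norm_num)]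
  have : (2:ℝ) ^ ν ≠ 0 := by positivity
  field_simp

lemma aux_gauss (β v x : ℝ) (hv : 0 < v) :
    Real.exp (β * x) * Real.exp (-v - x ^ 2 / (4 * v)) =
      Real.exp (-((1 - β ^ 2) * v)) * Real.exp (-(1 / (4 * v)) * (x - 2 * β * v) ^ 2) := by
  rw [← Real.exp_add, ← Real.exp_add]
  congr 1
  field_simp
  ring

/-- For `ν > −1/2` and `−1 < β < 1`,
`∫_{−∞}^{∞} e^{βx} |x|^ν K_ν(|x|) dx = √π Γ(ν + 1/2) 2^ν / (1 − β²)^{ν + 1/2}`. -/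
theorem integral_exp_mul_abs_rpow_besselK
    (ν β : ℝ) (hν : -(1 / 2 : ℝ) < ν) (hβ : β ∈ Set.Ioo (-1 : ℝ) 1) :
    ∫ x : ℝ, Real.exp (β * x) * |x| ^ ν * besselK ν |x|
      = Real.sqrt Real.pi * Real.Gamma (ν + 1 / 2) * 2 ^ ν / (1 - β ^ 2) ^ (ν + 1 / 2) := by
  have hr : 0 < 1 - β ^ 2 := by nlinarith [hβ.1, hβ.2]
  set F : ℝ → ℝ → ℝ := fun x v =>
    Real.exp (β * x) * (v ^ (ν - 1) * Real.exp (-v - x ^ 2 / (4 * v))) with hF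
  have hF2 : ∀ v, 0 < v → (fun x => F x v) = fun x =>
      (v ^ (ν - 1) * Real.exp (-((1 - β ^ 2) * v))) *
        Real.exp (-(1 / (4 * v)) * (x - 2 * β * v) ^ 2) := by
    intro v hv
    ext x
    simp only [hF]
    rw [mul_left_comm, aux_gauss β v x hv]; ring
  have hFi : ∀ v, 0 < v → Integrable (fun x => F x v) := by
    intro v hv
    rw [hF2 v hv]
    exact ((integrable_exp_neg_mul_sq (b := 1 / (4 * v)) (by positivity)).comp_sub_right
      (2 * β * v)).const_mul _
  have hFI : ∀ v, 0 < v → ∫ x, F x v =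
      (2 * √Real.pi) * (v ^ (ν + 1 / 2 - 1) * Real.exp (-((1 - β ^ 2) * v))) := by
    intro v hv
    rw [hF2 v hv, integral_const_mul,
      integral_sub_right_eq_self (fun x => Real.exp (-(1 / (4 * v)) * x ^ 2)), integral_gaussian,
      show Real.pi / (1 / (4 * v)) = 2 ^ 2 * Real.pi * v by field_simp; ring,
      Real.sqrt_mul (by positivity), Real.sqrt_mul (by positivity), Real.sqrt_sq (by norm_num),
      show ν + 1 / 2 - 1 = (ν - 1) + 1 / 2 by ring, Real.rpow_add hv, ← Real.sqrt_eq_rpow]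
    ring
  have hprod : Integrable (Function.uncurry F)
      (volume.prod (volume.restrict (Set.Ioi (0 : ℝ)))) := by
    rw [integrable_prod_iff' (Measurable.aestronglyMeasurable (by
      simp only [hF, Function.uncurry_def]; fun_prop))]
    constructor
    · filter_upwards [ae_restrict_mem measurableSet_Ioi] with v hv using hFi v hv
    · refine ((aux_gamma_int (ν + 1 / 2) (1 - β ^ 2) (by linarith) hr).const_mul
        (2 * √Real.pi)).congr ?_
      filter_upwards [ae_restrict_mem measurableSet_Ioi] with v hv
      have hv : 0 < v := hv
      rw [← hFI v hv]
      refine integral_congr_ae (Filter.Eventually.of_forall fun x => ?_)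
      simp only [Function.uncurry]
      rw [Real.norm_of_nonneg]
      simp only [hF]; positivity
  have h1 : ∫ x : ℝ, Real.exp (β * x) * |x| ^ ν * besselK ν |x|
      = ∫ x : ℝ, 2 ^ (ν - 1) * ∫ v in Set.Ioi (0 : ℝ), F x v := by
    refine integral_congr_ae ?_
    filter_upwards [Measure.ae_ne volume (0 : ℝ)] with x hx
    simp only [hF]
    rw [mul_assoc, aux_bessel ν |x| hν (abs_pos.2 hx), integral_const_mul, sq_abs]
    ring
  rw [h1, integral_const_mul, integral_integral_swap hprod,
    setIntegral_congr_fun measurableSet_Ioi (fun v hv => hFI v hv), integral_const_mul,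
    Real.integral_rpow_mul_exp_neg_mul_Ioi (by linarith) hr, Real.div_rpow zero_le_one hr.le,
    Real.one_rpow, Real.rpow_sub_one (by norm_num)]
  field_simp
end

section
/- Let ρ ∈ (−1, 1), let X and V be independent standard normal random variables, set Y = ρX + √(1 − ρ²)V and Z = XY. Then the law of Z is absolutely continuous with respect to Lebesgue measure, with density p(x) = (1/(π √(1 − ρ²))) exp(ρx/(1 − ρ²)) K₀(|x|/(1 − ρ²)) for x ≠ 0, where K₀(y) = ∫₀^∞ e^{−y cosh t} dt. -/
open MeasureTheory ProbabilityTheory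

lemma aux_lintegral_even (f : ℝ → ENNReal) (hf : ∀ x, f (-x) = f x) :
    ∫⁻ x, f x = 2 * ∫⁻ x in Set.Ioi (0 : ℝ), f x := by
  have h1 := lintegral_image_eq_lintegral_abs_deriv_mul (s := Set.Ioi (0 : ℝ)) (f := fun x => -x)
    (f' := fun _ => -1) measurableSet_Ioi (fun x _ => (hasDerivAt_neg x).hasDerivWithinAt)
    (fun x _ y _ h => neg_injective h) f
  have h2 : (fun x : ℝ => -x) '' Set.Ioi 0 = Set.Iio 0 := by
    simp
  rw [h2] at h1
  simp only [abs_neg, abs_one, ENNReal.ofReal_one, one_mul, hf] at h1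
  rw [← lintegral_add_compl f (measurableSet_Ioi (a := (0 : ℝ))), Set.compl_Ioi,
    ← setLIntegral_congr Iio_ae_eq_Iic, h1, two_mul]

lemma aux_besselK (y : ℝ) (hy : 0 < y) :
    ENNReal.ofReal (besselK 0 y) =
      ∫⁻ t in Set.Ioi (0 : ℝ), ENNReal.ofReal (Real.exp (-(y * Real.cosh t))) := by
  unfold besselK
  simp only [zero_mul, Real.cosh_zero, mul_one]
  refine ofReal_integral_eq_lintegral_ofReal ?_ (Filter.Eventually.of_forall fun t => by positivity)
  refine Integrable.mono' (exp_neg_integrableOn_Ioi 0 (half_pos hy))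
    (by fun_prop) (Filter.Eventually.of_forall fun t => ?_)
  rw [Real.norm_eq_abs, abs_of_pos (Real.exp_pos _)]
  apply Real.exp_le_exp.2
  have h1 := Real.add_one_le_exp t
  have h2 := Real.exp_pos (-t)
  rw [Real.cosh_eq]
  nlinarith

noncomputable def auxG (ρ x z : ℝ) : ENNReal :=
  ENNReal.ofReal ((2 * Real.pi * Real.sqrt (1 - ρ ^ 2) * |x|)⁻¹ *
    Real.exp (ρ * z / (1 - ρ ^ 2) - (x ^ 2 + z ^ 2 / x ^ 2) / (2 * (1 - ρ ^ 2))))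

lemma aux_lintegral_G (ρ : ℝ) (hρ : 0 < 1 - ρ ^ 2) (z : ℝ) (hz : z ≠ 0) :
    ∫⁻ x, auxG ρ x z = ENNReal.ofReal
      (1 / (Real.pi * Real.sqrt (1 - ρ ^ 2)) * Real.exp (ρ * z / (1 - ρ ^ 2)) *
        besselK 0 (|z| / (1 - ρ ^ 2))) := by
  have hs : 0 < Real.sqrt (1 - ρ ^ 2) := Real.sqrt_pos.2 hρ
  have ha : 0 < Real.sqrt |z| := Real.sqrt_pos.2 (abs_pos.2 hz)
  have hz' : 0 < |z| := abs_pos.2 hz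
  rw [aux_lintegral_even _ (fun x => by simp [auxG])]
  have h1 := lintegral_image_eq_lintegral_abs_deriv_mul (s := Set.univ)
    (f := fun t => Real.sqrt |z| * Real.exp (t / 2))
    (f' := fun t => Real.sqrt |z| * (Real.exp (t / 2) * (1 / 2))) MeasurableSet.univ
    (fun t _ => ((((hasDerivAt_id t).div_const 2).exp).const_mul _).hasDerivWithinAt)
    (fun t _ u _ h => by
      have := Real.exp_injective (mul_left_cancel₀ ha.ne' h)
      linarith) (fun x => auxG ρ x z)
  have h2 : (fun t => Real.sqrt |z| * Real.exp (t / 2)) '' Set.univ = Set.Ioi 0 := by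
    ext x
    simp only [Set.image_univ, Set.mem_range, Set.mem_Ioi]
    constructor
    · rintro ⟨t, rfl⟩
      positivity
    · intro hx
      refine ⟨2 * Real.log (x / Real.sqrt |z|), ?_⟩
      rw [mul_div_cancel_left₀ _ two_ne_zero, Real.exp_log (by positivity)]
      field_simp
  rw [h2] at h1
  rw [h1, setLIntegral_univ]
  have h3 : ∀ t : ℝ, ENNReal.ofReal |Real.sqrt |z| * (Real.exp (t / 2) * (1 / 2))| *
      auxG ρ (Real.sqrt |z| * Real.exp (t / 2)) z =
      ENNReal.ofReal ((4 * Real.pi * Real.sqrt (1 - ρ ^ 2))⁻¹ * Real.exp (ρ * z / (1 - ρ ^ 2))) *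
        ENNReal.ofReal (Real.exp (-(|z| / (1 - ρ ^ 2) * Real.cosh t))) := by
    intro t
    have e1 : Real.exp (t / 2) ^ 2 = Real.exp t := by
      rw [← Real.exp_nat_mul]; congr 1; push_cast; ring
    have hx2 : (Real.sqrt |z| * Real.exp (t / 2)) ^ 2 = |z| * Real.exp t := by
      rw [mul_pow, e1, Real.sq_sqrt hz'.le]
    unfold auxG
    rw [hx2, ← ENNReal.ofReal_mul (by positivity), ← ENNReal.ofReal_mul (by positivity),
      abs_of_pos (a := Real.sqrt |z| * (Real.exp (t / 2) * (1 / 2))) (by positivity),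
      abs_of_pos (a := Real.sqrt |z| * Real.exp (t / 2)) (by positivity), mul_assoc (4 * _ * _)⁻¹,
      ← Real.exp_add]
    congr 1
    have e2 : ρ * z / (1 - ρ ^ 2) - (|z| * Real.exp t + z ^ 2 / (|z| * Real.exp t)) /
        (2 * (1 - ρ ^ 2)) = ρ * z / (1 - ρ ^ 2) + -(|z| / (1 - ρ ^ 2) * Real.cosh t) := by
      rw [Real.cosh_eq, Real.exp_neg, ← sq_abs z]
      have := Real.exp_pos t
      field_simp
      ring
    rw [e2, ← mul_assoc]
    congr 1
    have := Real.exp_pos (t / 2)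
    field_simp
    norm_num
  simp_rw [h3]
  rw [aux_lintegral_even _ (fun x => by simp), lintegral_const_mul _ (by fun_prop),
    ← aux_besselK _ (by positivity), ← ENNReal.ofReal_mul (by positivity),
    show (2 : ENNReal) = ENNReal.ofReal 2 by simp,
    ← ENNReal.ofReal_mul (by positivity), ← ENNReal.ofReal_mul (by positivity)]
  congr 1
  field_simp
  norm_num

lemma aux_pdf_s15 (ρ : ℝ) (hρ : 0 < 1 - ρ ^ 2) (x : ℝ) (hx : x ≠ 0) (A : Set ℝ)
    (hA : MeasurableSet A) :
    gaussianPDF 0 1 x *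
      gaussianReal 0 1 {v | x * (ρ * x + Real.sqrt (1 - ρ ^ 2) * v) ∈ A} =
    ∫⁻ z in A, auxG ρ x z := by
  have hs : 0 < Real.sqrt (1 - ρ ^ 2) := Real.sqrt_pos.2 hρ
  have hx' : 0 < |x| := abs_pos.2 hx
  set s := Real.sqrt (1 - ρ ^ 2) with hsdef
  have hss : s ^ 2 = 1 - ρ ^ 2 := Real.sq_sqrt hρ.le
  have hm := gaussianReal_map_const_add (μ := (x * s) * 0)
    (v := NNReal.mk ((x * s) ^ 2) (sq_nonneg _) * 1) (x * (ρ * x))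
  rw [← gaussianReal_map_const_mul, Measure.map_map (by fun_prop) (by fun_prop)] at hm
  have hv : NNReal.mk ((x * s) ^ 2) (sq_nonneg _) * 1 ≠ 0 := by
    rw [mul_one, ← NNReal.coe_ne_zero]
    exact pow_ne_zero 2 (mul_ne_zero hx hs.ne')
  have h1 : gaussianReal 0 1 {v | x * (ρ * x + s * v) ∈ A} =
      gaussianReal (x * s * 0 + x * (ρ * x)) (NNReal.mk ((x * s) ^ 2) (sq_nonneg _) * 1) A := by
    rw [← hm, Measure.map_apply (by fun_prop) hA]
    congr 1
    ext v
    simp only [Set.mem_setOf_eq, Set.mem_preimage, Function.comp]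
    rw [show x * (ρ * x + s * v) = x * (ρ * x) + x * s * v by ring]
  rw [h1, gaussianReal_apply _ hv, ← lintegral_const_mul _ (measurable_gaussianPDF _ _)]
  congr 1
  ext z
  unfold auxG
  rw [gaussianPDF, gaussianPDF, ← ENNReal.ofReal_mul (gaussianPDFReal_nonneg _ _ _)]
  congr 1
  unfold gaussianPDFReal
  simp only [NNReal.coe_mul, NNReal.coe_one, mul_one, NNReal.coe_mk, mul_zero, zero_add, sub_zero]
  rw [← hsdef, ← hss]
  have e0 : Real.sqrt (2 * Real.pi * (x * s) ^ 2) = Real.sqrt (2 * Real.pi) * (|x| * s) := by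
    rw [Real.sqrt_mul (by positivity), Real.sqrt_sq_eq_abs, abs_mul, abs_of_pos hs]
  have e1 : Real.sqrt (2 * Real.pi) * Real.sqrt (2 * Real.pi) = 2 * Real.pi :=
    Real.mul_self_sqrt (by positivity)
  have e2 : ρ * z / s ^ 2 - (x ^ 2 + z ^ 2 / x ^ 2) / (2 * s ^ 2) =
      -x ^ 2 / 2 + -(z - x * (ρ * x)) ^ 2 / (2 * (x * s) ^ 2) := by
    have : ρ ^ 2 = 1 - s ^ 2 := by linarith
    field_simp
    ring_nf
    rw [this]
    ring
  rw [e2, Real.exp_add, e0]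
  calc _ = (Real.sqrt (2 * Real.pi) * Real.sqrt (2 * Real.pi) * s * |x|)⁻¹ * (Real.exp (-x ^ 2 / 2) * Real.exp (-(z - x * (ρ * x)) ^ 2 / (2 * (x * s) ^ 2))) := by
        simp only [mul_inv]; ring
    _ = _ := by rw [e1]

/-- The product `Z = XY` of two zero mean, unit variance, correlation-`ρ` jointly normal
random variables (realised as `Z = XY` with `X, V` independent standard normals and
`Y = ρX + √(1 − ρ²)V`) has law absolutely continuous with respect to Lebesgue measure, with
density `p(x) = (1/(π√(1 − ρ²))) e^{ρx/(1 − ρ²)} K₀(|x|/(1 − ρ²))`. -/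
theorem product_normal_density
    {Ω : Type*} [MeasurableSpace Ω] (P : Measure Ω) [IsProbabilityMeasure P]
    (ρ : ℝ) (hρ : ρ ∈ Set.Ioo (-1 : ℝ) 1)
    (X V : Ω → ℝ) (hX : Measurable X) (hV : Measurable V)
    (hXlaw : P.map X = gaussianReal 0 1) (hVlaw : P.map V = gaussianReal 0 1)
    (hindep : IndepFun X V P)
    (Y Z : Ω → ℝ)
    (hY : ∀ ω, Y ω = ρ * X ω + Real.sqrt (1 - ρ ^ 2) * V ω)
    (hZ : ∀ ω, Z ω = X ω * Y ω) :
    P.map Z = volume.withDensity (fun x => ENNReal.ofReal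
      (1 / (Real.pi * Real.sqrt (1 - ρ ^ 2)) * Real.exp (ρ * x / (1 - ρ ^ 2)) *
        besselK 0 (|x| / (1 - ρ ^ 2)))) := by
  have hq : 0 < 1 - ρ ^ 2 := by nlinarith [hρ.1, hρ.2]
  have hjoint := hindep.map_prod_eq_prod_map_map hX.aemeasurable hV.aemeasurable
  rw [hXlaw, hVlaw] at hjoint
  have hF : Measurable (fun p : ℝ × ℝ => p.1 * (ρ * p.1 + Real.sqrt (1 - ρ ^ 2) * p.2)) := by
    fun_prop
  have hZ' : Z = (fun p : ℝ × ℝ => p.1 * (ρ * p.1 + Real.sqrt (1 - ρ ^ 2) * p.2)) ∘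
      (fun ω => (X ω, V ω)) := by
    ext ω
    simp [hZ, hY]
  have hG : Measurable (Function.uncurry (auxG ρ)) := by
    unfold auxG Function.uncurry
    fun_prop
  have hne : ∀ᵐ x : ℝ ∂volume, x ≠ 0 := by
    simp [ae_iff]
  ext A hA
  rw [hZ', ← Measure.map_map hF (hX.prodMk hV), hjoint, Measure.map_apply hF hA,
    Measure.prod_apply (hF hA), gaussianReal_of_var_ne_zero 0 one_ne_zero,
    lintegral_withDensity_eq_lintegral_mul _ (measurable_gaussianPDF _ _)
      (measurable_measure_prodMk_left (hF hA)), withDensity_apply _ hA,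
    ← gaussianReal_of_var_ne_zero 0 one_ne_zero]
  calc _ = ∫⁻ x, ∫⁻ z in A, auxG ρ x z := by
        refine lintegral_congr_ae ?_
        filter_upwards [hne] with x hx
        exact aux_pdf_s15 ρ hq x hx A hA
    _ = ∫⁻ z in A, ∫⁻ x, auxG ρ x z := lintegral_lintegral_swap hG.aemeasurable
    _ = _ := by
        refine lintegral_congr_ae (ae_restrict_of_ae ?_)
        filter_upwards [hne] with z hz
        exact aux_lintegral_G ρ hq z hz
end
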